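/- Let (R, m) be a commutative Noetherian local ring and M an R-module of Krull dimension n such that H^n_m(M) is nonzero and Artinian, and let I be an ideal of R such that dim(R/(I + Ann M)) = 1, where Ann M is the annihilator of M. Then the top local cohomology module H^{cd(I,M)}_I(M) is an Artinian R-module if and only if cd(I,M) = n. -/

import Mathlib

universe u

open CategoryTheory

/-- The cohomological dimension of `M` with respect to `I`:
`cd(I,M) = sup { i ∈ ℕ | H^i_I(M) ≠ 0 }`, as an element of `ℕ∞`. -/
noncomputable def cohomologicalDimension {R : Type u} [CommRing R] (I : Ideal R)
    (M : ModuleCat.{u} R) : ℕ∞ :=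
  sSup {c : ℕ∞ | ∃ i : ℕ, c = i ∧ Nontrivial ((localCohomology I i).obj M)}

/-!
Modulo radicals, `m` is `I + Ann M + (x)` for some `x ∈ m`, so everything rests on comparing `H_J`
with `H_{J + (x)}`. For an injective resolution `E` of `M` these are the cohomologies of `Γ_J(E)`
and of its subcomplex `Γ_{J + (x)}(E)`. Over a Noetherian ring `Γ_J` of an injective module is
divisible by powers of `x` up to `x`-power torsion, and so are the coboundaries of `Γ_J(E)`.
Correcting a cocycle by such coboundaries shows that `H^i_{J + (x)} → H^i_J` is surjective, and
`H^{i+1}_{J + (x)} → H^{i+1}_J` injective, as soon as `H^i_J` is `x`-power torsion.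

At a prime `p` containing `x` where `H^{i+1}_J` vanishes, the same correction shows that
`H^{i+1}_{J + (x)}` vanishes too, unless `H^i_J` is supported at some prime strictly below `p`.
Inductively, a prime supporting `H^i_J(M)` has height at least `i` in `Supp M`, which is
Grothendieck vanishing.

Hence `H^n_I(M)` is supported at maximal ideals when `dim M ≤ n`, is therefore `x`-power torsion,
and is a quotient of the Artinian module `H^n_m(M)`. Conversely, if `H^c_I(M)` is Artinian and
`c = cd(I, M) < n`, then `H^{n-1}_I(M)` is Artinian or zero, hence `x`-power torsion, and
`H^n_I(M) = 0` forces `H^n_m(M) = 0`.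
-/

section LeftDerived

open Limits HomologicalComplex

variable {C D : Type*} [Category* C] [Category* D] [Abelian C] [Abelian D]

section FromLeftDerivedZero

variable {F G : C ⥤ D} [F.Additive] [G.Additive] (α : F ⟶ G)

lemma opcyclesMap_comp_fromLeftDerivedZero' {A : C} (P : ProjectiveResolution A) :
    opcyclesMap ((NatTrans.mapHomologicalComplex α _).app P.complex) 0 ≫
      P.fromLeftDerivedZero' G = P.fromLeftDerivedZero' F ≫ α.app A := by
  rw [← cancel_epi (pOpcycles _ _), p_opcyclesMap_assoc,
    ProjectiveResolution.pOpcycles_comp_fromLeftDerivedZero',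
    ProjectiveResolution.pOpcycles_comp_fromLeftDerivedZero'_assoc]
  exact (α.naturality _).symm

lemma leftDerived_comp_fromLeftDerivedZero [HasProjectiveResolutions C] :
    NatTrans.leftDerived α 0 ≫ G.fromLeftDerivedZero = F.fromLeftDerivedZero ≫ α := by
  ext A
  let P := projectiveResolution A
  let fromHomology (H : C ⥤ D) [H.Additive] :
      (homologyFunctor D _ 0).obj ((H.mapHomologicalComplex _).obj P.complex) ⟶ H.obj A :=
    homologyι _ 0 ≫ P.fromLeftDerivedZero' H
  have eq_fromHomology (H : C ⥤ D) [H.Additive] :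
      H.fromLeftDerivedZero.app A = (P.isoLeftDerivedObj H 0).hom ≫ fromHomology H :=
    P.fromLeftDerivedZero_eq H
  have fromHomology_naturality :
      (homologyFunctor D _ 0).map ((NatTrans.mapHomologicalComplex α _).app P.complex) ≫
        fromHomology G = fromHomology F ≫ α.app A := by
    have naturality := homologyι_naturality_assoc
      ((NatTrans.mapHomologicalComplex α _).app P.complex) 0 (P.fromLeftDerivedZero' G)
    rw [opcyclesMap_comp_fromLeftDerivedZero'] at naturality
    exact naturality.trans (Category.assoc _ _ _).symm
  simp only [NatTrans.comp_app, eq_fromHomology, ProjectiveResolution.leftDerived_app_eq α P,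
    Category.assoc, Iso.inv_hom_id_assoc, fromHomology_naturality]

end FromLeftDerivedZero

variable (T : ShortComplex (C ⥤ D)) [T.X₁.Additive] [T.X₂.Additive] [T.X₃.Additive]

/-- The functor applying a short complex of additive functors termwise to chain complexes. -/
@[simps]
noncomputable def mapChainComplexFunctor : ChainComplex C ℕ ⥤ ShortComplex (ChainComplex D ℕ) where
  obj K := ShortComplex.mk ((NatTrans.mapHomologicalComplex T.f _).app K)
    ((NatTrans.mapHomologicalComplex T.g _).app K) (by ext n; exact congr_app T.zero (K.X n))
  map φ :=
    { τ₁ := (T.X₁.mapHomologicalComplex _).map φ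
      τ₂ := (T.X₂.mapHomologicalComplex _).map φ
      τ₃ := (T.X₃.mapHomologicalComplex _).map φ
      comm₁₂ := (NatTrans.mapHomologicalComplex T.f _).naturality φ
      comm₂₃ := (NatTrans.mapHomologicalComplex T.g _).naturality φ }

/-- A short complex of functors is short exact on projectives if its values at all projective
objects are short exact; this is what makes the left derived functors of its terms fit into a
long exact sequence. -/
def ShortExactOnProjectives : Prop :=
  ∀ P : C, Projective P → (T.map ((evaluation C D).obj P)).ShortExact

variable {T} (hT : ShortExactOnProjectives T)

namespace ShortExactOnProjectives

include hT in
lemma shortExact_mapChainComplexFunctor {A : C} (P : ProjectiveResolution A) :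
    ((mapChainComplexFunctor T).obj P.complex).ShortExact :=
  shortExact_of_degreewise_shortExact _ fun n => hT _ (P.projective n)

/-- The connecting morphism of the long exact homology sequence obtained by applying a short complex
of functors to a projective resolution. -/
noncomputable def resolutionδ {A : C} (P : ProjectiveResolution A) (n : ℕ) :
    (homologyFunctor D _ (n + 1)).obj ((T.X₃.mapHomologicalComplex _).obj P.complex) ⟶
      (homologyFunctor D _ n).obj ((T.X₁.mapHomologicalComplex _).obj P.complex) :=
  (hT.shortExact_mapChainComplexFunctor P).δ (n + 1) n (by simp)

lemma resolutionδ_naturality {A B : C} (P : ProjectiveResolution A) (Q : ProjectiveResolution B)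
    (φ : P.complex ⟶ Q.complex) (n : ℕ) :
    (T.X₃.mapHomologicalComplex _ ⋙ homologyFunctor D _ (n + 1)).map φ ≫ hT.resolutionδ Q n =
      hT.resolutionδ P n ≫ (T.X₁.mapHomologicalComplex _ ⋙ homologyFunctor D _ n).map φ :=
  (HomologySequence.δ_naturality ((mapChainComplexFunctor T).map φ)
    (hT.shortExact_mapChainComplexFunctor P) (hT.shortExact_mapChainComplexFunctor Q)
    (n + 1) n (by simp)).symm

lemma homology_comp_resolutionδ {A : C} (P : ProjectiveResolution A) (n : ℕ) :
    (homologyFunctor D _ (n + 1)).map ((NatTrans.mapHomologicalComplex T.g _).app P.complex) ≫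
      hT.resolutionδ P n = 0 :=
  (hT.shortExact_mapChainComplexFunctor P).comp_δ (n + 1) n (by simp)

lemma resolutionδ_comp_homology {A : C} (P : ProjectiveResolution A) (n : ℕ) :
    hT.resolutionδ P n ≫
      (homologyFunctor D _ n).map ((NatTrans.mapHomologicalComplex T.f _).app P.complex) = 0 :=
  (hT.shortExact_mapChainComplexFunctor P).δ_comp (n + 1) n (by simp)

variable [HasProjectiveResolutions C]

/-- The connecting morphism of the long exact sequence of left derived functors. -/
noncomputable def leftDerivedδ (n : ℕ) :
    T.X₃.leftDerived (n + 1) ⟶ T.X₁.leftDerived n where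
  app A := ((projectiveResolution A).isoLeftDerivedObj T.X₃ (n + 1)).hom ≫
    hT.resolutionδ (projectiveResolution A) n ≫
    ((projectiveResolution A).isoLeftDerivedObj T.X₁ n).inv
  naturality A B f := by
    have comm := ProjectiveResolution.lift_commutes_zero f (projectiveResolution A)
      (projectiveResolution B)
    rw [ProjectiveResolution.isoLeftDerivedObj_hom_naturality_assoc f _ _ _ comm,
      reassoc_of% hT.resolutionδ_naturality, Category.assoc, Category.assoc,
      ProjectiveResolution.isoLeftDerivedObj_inv_naturality f _ _ _ comm]
    rfl

lemma leftDerived_comp_δ (n : ℕ) (A : C) :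
    (NatTrans.leftDerived T.g (n + 1)).app A ≫ (hT.leftDerivedδ n).app A = 0 := by
  rw [ProjectiveResolution.leftDerived_app_eq T.g (projectiveResolution A)]
  simp only [leftDerivedδ, Category.assoc, Iso.inv_hom_id_assoc,
    reassoc_of% hT.homology_comp_resolutionδ, zero_comp, comp_zero]

lemma leftDerivedδ_comp (n : ℕ) (A : C) :
    (hT.leftDerivedδ n).app A ≫ (NatTrans.leftDerived T.f n).app A = 0 := by
  rw [ProjectiveResolution.leftDerived_app_eq T.f (projectiveResolution A)]
  simp only [leftDerivedδ, Category.assoc, Iso.inv_hom_id_assoc,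
    reassoc_of% hT.resolutionδ_comp_homology, zero_comp, comp_zero]

lemma leftDerived_exact₃ (n : ℕ) (A : C) :
    (ShortComplex.mk _ _ (hT.leftDerived_comp_δ n A)).Exact := by
  let P := projectiveResolution A
  have resolution_exact : (ShortComplex.mk _ _ (hT.homology_comp_resolutionδ P n)).Exact :=
    (hT.shortExact_mapChainComplexFunctor P).homology_exact₃ (n + 1) n (by simp)
  refine (ShortComplex.exact_iff_of_iso (ShortComplex.isoMk (P.isoLeftDerivedObj T.X₂ (n + 1))
    (P.isoLeftDerivedObj T.X₃ (n + 1)) (P.isoLeftDerivedObj T.X₁ n) ?_ ?_)).2 resolution_exact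
  · dsimp only
    rw [ProjectiveResolution.leftDerived_app_eq T.g P]
    simp only [Category.assoc, Iso.inv_hom_id, Category.comp_id]
  · simp only [leftDerivedδ, P, Category.assoc, Iso.inv_hom_id, Category.comp_id]

lemma leftDerived_exact₁ (n : ℕ) (A : C) :
    (ShortComplex.mk _ _ (hT.leftDerivedδ_comp n A)).Exact := by
  let P := projectiveResolution A
  have resolution_exact : (ShortComplex.mk _ _ (hT.resolutionδ_comp_homology P n)).Exact :=
    (hT.shortExact_mapChainComplexFunctor P).homology_exact₁ (n + 1) n (by simp)
  refine (ShortComplex.exact_iff_of_iso (ShortComplex.isoMk (P.isoLeftDerivedObj T.X₃ (n + 1))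
    (P.isoLeftDerivedObj T.X₁ n) (P.isoLeftDerivedObj T.X₂ n) ?_ ?_)).2 resolution_exact
  · simp only [leftDerivedδ, P, Category.assoc, Iso.inv_hom_id, Category.comp_id]
  · dsimp only
    rw [ProjectiveResolution.leftDerived_app_eq T.f P]
    simp only [Category.assoc, Iso.inv_hom_id, Category.comp_id]

end ShortExactOnProjectives

end LeftDerived

section Ext

open Limits Opposite

variable {R : Type*} [Ring R] {C : Type*} [Category* C] [Abelian C] [Linear R C]

instance (Y : C) : PreservesLimits ((linearYoneda R C).obj Y) :=
  have : PreservesLimits ((linearYoneda R C).obj Y ⋙ forget _) :=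
    (inferInstance : PreservesLimits (yoneda.obj Y))
  preservesLimits_of_reflects_of_preserves _ (forget _)

instance (Y : C) : PreservesFiniteColimits ((linearYoneda R C).obj Y).rightOp :=
  preservesFiniteColimits_rightOp _

variable (R) in
/-- The short complex of functors `Hom(-, S.X₃) ⟶ Hom(-, S.X₂) ⟶ Hom(-, S.X₁)` to the opposite
category of modules attached to a short complex `S`. -/
@[simps]
noncomputable def homShortComplex (S : ShortComplex C) : ShortComplex (C ⥤ (ModuleCat R)ᵒᵖ) where
  X₁ := ((linearYoneda R C).obj S.X₃).rightOp
  X₂ := ((linearYoneda R C).obj S.X₂).rightOp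
  X₃ := ((linearYoneda R C).obj S.X₁).rightOp
  f := NatTrans.rightOp ((linearYoneda R C).map S.g)
  g := NatTrans.rightOp ((linearYoneda R C).map S.f)
  zero := by
    ext P : 2
    apply Quiver.Hom.unop_inj
    ext (x : P ⟶ S.X₁)
    change (x ≫ S.f) ≫ S.g = 0
    simp

instance (S : ShortComplex C) : (homShortComplex R S).X₁.Additive :=
  inferInstanceAs ((linearYoneda R C).obj S.X₃).rightOp.Additive

instance (S : ShortComplex C) : (homShortComplex R S).X₂.Additive :=
  inferInstanceAs ((linearYoneda R C).obj S.X₂).rightOp.Additive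

instance (S : ShortComplex C) : (homShortComplex R S).X₃.Additive :=
  inferInstanceAs ((linearYoneda R C).obj S.X₁).rightOp.Additive

variable {S : ShortComplex C} (hS : S.ShortExact)

include hS in
lemma shortExactOnProjectives_homShortComplex :
    ShortExactOnProjectives (homShortComplex R S) := by
  intro P _
  have := hS.mono_f
  have := hS.epi_g
  have hom_shortExact :
      (((homShortComplex R S).map ((evaluation C (ModuleCat R)ᵒᵖ).obj P)).unop).ShortExact :=
    { exact := by
        rw [ShortComplex.moduleCat_exact_iff]
        intro (x : P ⟶ S.X₂) (hx : x ≫ S.g = 0)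
        exact ⟨(hS.exact.lift x hx :), hS.exact.lift_f x hx⟩
      mono_f := by
        rw [ModuleCat.mono_iff_injective]
        intro (x : P ⟶ S.X₁) (y : P ⟶ S.X₁) (hxy : x ≫ S.f = y ≫ S.f)
        exact (cancel_mono S.f).1 hxy
      epi_g := by
        rw [ModuleCat.epi_iff_surjective]
        intro (x : P ⟶ S.X₃)
        exact ⟨(Projective.factorThru x S.g :), Projective.factorThru_comp x S.g⟩ }
  exact hom_shortExact.op

variable [EnoughProjectives C]

variable (R) in
/-- The connecting morphism of the long exact sequence of `Ext` in the second variable. -/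
noncomputable def extδ (n : ℕ) : (Ext R C n).flip.obj S.X₃ ⟶ (Ext R C (n + 1)).flip.obj S.X₁ :=
  NatTrans.leftOp ((shortExactOnProjectives_homShortComplex (R := R) hS).leftDerivedδ n)

lemma ext_map_comp_extδ (n : ℕ) (A : Cᵒᵖ) :
    ((Ext R C n).flip.map S.g).app A ≫ (extδ R hS n).app A = 0 :=
  Quiver.Hom.op_inj ((shortExactOnProjectives_homShortComplex hS).leftDerivedδ_comp n A.unop)

lemma extδ_comp_ext_map (n : ℕ) (A : Cᵒᵖ) :
    (extδ R hS n).app A ≫ ((Ext R C (n + 1)).flip.map S.f).app A = 0 :=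
  Quiver.Hom.op_inj ((shortExactOnProjectives_homShortComplex hS).leftDerived_comp_δ n A.unop)

lemma ext_exact₃ (n : ℕ) (A : Cᵒᵖ) :
    (ShortComplex.mk _ _ (ext_map_comp_extδ (R := R) hS n A)).Exact :=
  ((shortExactOnProjectives_homShortComplex hS).leftDerived_exact₁ n A.unop).unop

lemma ext_exact₁ (n : ℕ) (A : Cᵒᵖ) :
    (ShortComplex.mk _ _ (extδ_comp_ext_map (R := R) hS n A)).Exact :=
  ((shortExactOnProjectives_homShortComplex hS).leftDerived_exact₃ n A.unop).unop

lemma isZero_Ext_succ_of_injective (A : Cᵒᵖ) (E : C) [Injective E] (n : ℕ) :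
    IsZero (((Ext R C (n + 1)).obj A).obj E) := by
  refine IsZero.of_iso ?_ ((projectiveResolution A.unop).isoExt (n + 1) E)
  rw [← HomologicalComplex.exactAt_iff_isZero_homology,
    HomologicalComplex.exactAt_iff' _ n (n + 1) (n + 2) (by simp) (by simp),
    ShortComplex.moduleCat_exact_iff]
  intro (x : _ ⟶ E) hx
  have hP := (projectiveResolution A.unop).exact_succ n
  exact ⟨(hP.descToInjective x hx :), hP.comp_descToInjective x hx⟩

variable (R C) in
/-- The natural isomorphism `Hom(A, Y) ≅ Ext⁰(A, Y)`. -/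
noncomputable def homIsoExtZero : linearYoneda R C ≅ (Ext R C 0).flip :=
  NatIso.ofComponents
    (fun Y =>
      { hom := NatTrans.leftOp ((linearYoneda R C).obj Y).rightOp.leftDerivedZeroIsoSelf.hom
        inv := NatTrans.leftOp ((linearYoneda R C).obj Y).rightOp.leftDerivedZeroIsoSelf.inv
        hom_inv_id := congr_arg NatTrans.leftOp (Iso.inv_hom_id _)
        inv_hom_id := congr_arg NatTrans.leftOp (Iso.hom_inv_id _) })
    fun f => (congr_arg NatTrans.leftOp (leftDerived_comp_fromLeftDerivedZero
      (NatTrans.rightOp ((linearYoneda R C).map f)))).symm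

end Ext

section ExactColimits

open Limits

lemma exact_of_forall_exact_evaluation {J C : Type*} [Category* J] [Category* C] [Abelian C]
    (S : ShortComplex (J ⥤ C)) (hS : ∀ j, (S.map ((evaluation J C).obj j)).Exact) : S.Exact := by
  rw [ShortComplex.exact_iff_isZero_homology, Functor.isZero_iff]
  exact fun j => ((S.map ((evaluation J C).obj j)).exact_iff_isZero_homology.1 (hS j)).of_iso
    (S.mapHomologyIso ((evaluation J C).obj j)).symm

end ExactColimits

section LocalCohomology

open Limits Opposite localCohomology

variable {R : Type u} [CommRing R] (J : Ideal R)

instance : AB5OfSize.{0, 0} (ModuleCat.{u} R) :=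
  AB5OfSize_of_univLE.{0, 0, u, u} _

/-- The canonical cocone on the modules `Ext^i(R/J^t, M)` with point `H^i_J(M)`. -/
noncomputable def extCocone (i : ℕ) (M : ModuleCat.{u} R) :
    Cocone ((ringModIdeals (idealPowersDiagram J)).op ⋙ (Ext R (ModuleCat.{u} R) i).flip.obj M) :=
  ((evaluation _ _).obj M).mapCocone (colimit.cocone (diagram (idealPowersDiagram J) i))

/-- Local cohomology is computed objectwise as a colimit of `Ext` modules. -/
noncomputable def isColimitExtCocone (i : ℕ) (M : ModuleCat.{u} R) :
    IsColimit (extCocone J i M) :=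
  isColimitOfPreserves ((evaluation _ _).obj M)
    (colimit.isColimit (diagram (idealPowersDiagram J) i))

lemma extCocone_ι_comp_map (i : ℕ) {M N : ModuleCat.{u} R} (f : M ⟶ N) (t : ℕᵒᵖᵒᵖ) :
    (extCocone J i M).ι.app t ≫ (localCohomology J i).map f =
      ((Ext R _ i).flip.map f).app ((ringModIdeals (idealPowersDiagram J)).op.obj t) ≫
        (extCocone J i N).ι.app t :=
  ((colimit.ι (diagram (idealPowersDiagram J) i) t).naturality f).symm

lemma subsingleton_localCohomology_succ_of_injective (E : ModuleCat.{u} R) [Injective E] (i : ℕ) :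
    Subsingleton ((localCohomology J (i + 1)).obj E) := by
  refine ModuleCat.subsingleton_of_isZero ((IsZero.iff_id_eq_zero _).2 ?_)
  exact (isColimitExtCocone J (i + 1) E).hom_ext fun t =>
    (isZero_Ext_succ_of_injective _ E i).eq_of_src _ _

variable {S : ShortComplex (ModuleCat.{u} R)} (hS : S.ShortExact)

/-- The connecting morphism of the long exact sequence of local cohomology. -/
noncomputable def localCohomologyδ (i : ℕ) :
    (localCohomology J i).obj S.X₃ ⟶ (localCohomology J (i + 1)).obj S.X₁ :=
  (isColimitExtCocone J i S.X₃).map (extCocone J (i + 1) S.X₁) (Functor.whiskerLeft _ (extδ R hS i))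

lemma extCocone_ι_comp_δ (i : ℕ) (t : ℕᵒᵖᵒᵖ) :
    (extCocone J i S.X₃).ι.app t ≫ localCohomologyδ J hS i =
      (extδ R hS i).app ((ringModIdeals (idealPowersDiagram J)).op.obj t) ≫
        (extCocone J (i + 1) S.X₁).ι.app t :=
  IsColimit.ι_map _ _ _ _

lemma localCohomology_exact₃ (i : ℕ) :
    Function.Exact ((localCohomology J i).map S.g).hom (localCohomologyδ J hS i).hom := by
  let T : ShortComplex (ℕᵒᵖᵒᵖ ⥤ ModuleCat.{u} R) :=
    ShortComplex.mk (Functor.whiskerLeft (ringModIdeals (idealPowersDiagram J)).op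
      ((Ext R _ i).flip.map S.g)) (Functor.whiskerLeft _ (extδ R hS i))
      (by ext t : 2; exact ext_map_comp_extδ hS i _)
  have hT : T.Exact := exact_of_forall_exact_evaluation T fun t => ext_exact₃ hS i _
  exact (ShortComplex.ShortExact.moduleCat_exact_iff_function_exact _).1
    (colim.exact_mapShortComplex hT (isColimitExtCocone J i S.X₂) (isColimitExtCocone J i S.X₃)
      (isColimitExtCocone J (i + 1) S.X₁) _ _ (extCocone_ι_comp_map J i S.g)
      (extCocone_ι_comp_δ J hS i))

lemma localCohomology_exact₁ (i : ℕ) :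
    Function.Exact (localCohomologyδ J hS i).hom ((localCohomology J (i + 1)).map S.f).hom := by
  let T : ShortComplex (ℕᵒᵖᵒᵖ ⥤ ModuleCat.{u} R) :=
    ShortComplex.mk (Functor.whiskerLeft (ringModIdeals (idealPowersDiagram J)).op (extδ R hS i))
      (Functor.whiskerLeft _ ((Ext R _ (i + 1)).flip.map S.f))
      (by ext t : 2; exact extδ_comp_ext_map hS i _)
  have hT : T.Exact := exact_of_forall_exact_evaluation T fun t => ext_exact₁ hS i _
  exact (ShortComplex.ShortExact.moduleCat_exact_iff_function_exact _).1
    (colim.exact_mapShortComplex hT (isColimitExtCocone J i S.X₃)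
      (isColimitExtCocone J (i + 1) S.X₁) (isColimitExtCocone J (i + 1) S.X₂) _ _
      (extCocone_ι_comp_δ J hS i) (extCocone_ι_comp_map J (i + 1) S.f))

lemma localCohomologyδ_surjective [Injective S.X₂] (i : ℕ) :
    Function.Surjective (localCohomologyδ J hS i).hom := by
  have := subsingleton_localCohomology_succ_of_injective J S.X₂ i
  exact fun y => (localCohomology_exact₁ J hS i y).1 (Subsingleton.elim _ _)

lemma localCohomologyδ_succ_injective [Injective S.X₂] (i : ℕ) :
    Function.Injective (localCohomologyδ J hS (i + 1)).hom := by
  have := subsingleton_localCohomology_succ_of_injective J S.X₂ i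
  refine (injective_iff_map_eq_zero _).2 fun y hy => ?_
  obtain ⟨z, rfl⟩ := (localCohomology_exact₃ J hS (i + 1) y).1 hy
  rw [Subsingleton.elim z 0, map_zero]

end LocalCohomology

section LocalCohomologyZero

open Limits Opposite localCohomology

variable {R : Type u} [CommRing R] (J : Ideal R)

/-- The submodule of the elements of `M` killed by a power of `J`, usually denoted `Γ_J(M)`. -/
def powerTorsion (M : Type*) [AddCommGroup M] [Module R M] : Submodule R M where
  carrier := {m | ∃ t : ℕ, ∀ a ∈ J ^ t, a • m = 0}
  zero_mem' := ⟨0, fun _ _ => smul_zero _⟩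
  add_mem' := by
    rintro m m' ⟨t, hm⟩ ⟨t', hm'⟩
    refine ⟨t + t', fun a ha => ?_⟩
    rw [smul_add, hm a (Ideal.pow_le_pow_right (Nat.le_add_right t t') ha),
      hm' a (Ideal.pow_le_pow_right (Nat.le_add_left t' t) ha), add_zero]
  smul_mem' := by
    rintro r m ⟨t, hm⟩
    exact ⟨t, fun a ha => by rw [smul_comm, hm a ha, smul_zero]⟩

variable {J} in
lemma mem_powerTorsion {M : Type*} [AddCommGroup M] [Module R M] {m : M} :
    m ∈ powerTorsion J M ↔ ∃ t : ℕ, ∀ a ∈ J ^ t, a • m = 0 :=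
  Iff.rfl

instance : PreservesFilteredColimitsOfSize.{0, 0} (forget (ModuleCat.{u} R)) :=
  preservesFilteredColimitsOfSize_shrink.{0, u, 0, u} _

/-- Evaluation of morphisms out of `A` at an element of `A`. -/
noncomputable def homEvaluation {A : ModuleCat.{u} R} (a : A) :
    (linearYoneda R (ModuleCat.{u} R)).flip.obj (op A) ⟶ 𝟭 _ where
  app M := ModuleCat.ofHom
    { toFun (φ : A ⟶ M) := φ a
      map_add' _ _ := rfl
      map_smul' _ _ := rfl }

/-- The cocone on the functors `Ext^0(R/J^t, -)` given by evaluating morphisms `R/J^t ⟶ M` at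
`1`. -/
noncomputable def homEvaluationCocone : Cocone (diagram (idealPowersDiagram J) 0) where
  pt := 𝟭 (ModuleCat.{u} R)
  ι :=
    { app t := ((flipFunctor _ _ _).map (homIsoExtZero R (ModuleCat.{u} R)).inv).app
          ((ringModIdeals (idealPowersDiagram J)).op.obj t) ≫
        homEvaluation (Ideal.Quotient.mk (J ^ t.unop.unop) 1)
      naturality _ t f :=
        (((flipFunctor _ _ _).map (homIsoExtZero R (ModuleCat.{u} R)).inv).naturality
          ((ringModIdeals (idealPowersDiagram J)).op.map f) =≫
            homEvaluation (Ideal.Quotient.mk (J ^ t.unop.unop) 1) :) }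

/-- The canonical morphism `H^0_J(M) ⟶ M`. -/
noncomputable def localCohomologyZeroι : localCohomology J 0 ⟶ 𝟭 (ModuleCat.{u} R) :=
  colimit.desc _ (homEvaluationCocone J)

lemma extCocone_ι_localCohomologyZeroι (t : ℕᵒᵖᵒᵖ) (M : ModuleCat.{u} R)
    (φ : ModuleCat.of R (R ⧸ J ^ t.unop.unop) ⟶ M) :
    (localCohomologyZeroι J).app M ((extCocone J 0 M).ι.app t
      (((homIsoExtZero R _).hom.app M).app _ φ)) = φ (Ideal.Quotient.mk _ 1) := by
  have fac := congr_app (colimit.ι_desc (homEvaluationCocone J) t) M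
  refine (ConcreteCategory.congr_hom fac _).trans ?_
  exact congr_arg (fun ψ : ModuleCat.of R (R ⧸ J ^ t.unop.unop) ⟶ M => ψ (Ideal.Quotient.mk _ 1))
    (ConcreteCategory.congr_hom (congr_app (congr_app (homIsoExtZero R _).hom_inv_id M) _) φ)

lemma exists_extCocone_ι_eq {M : ModuleCat.{u} R} (z : (localCohomology J 0).obj M) :
    ∃ (t : ℕᵒᵖᵒᵖ) (φ : ModuleCat.of R (R ⧸ J ^ t.unop.unop) ⟶ M),
      (extCocone J 0 M).ι.app t (((homIsoExtZero R _).hom.app M).app _ φ) = z := by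
  obtain ⟨t, y, rfl⟩ := Concrete.isColimit_exists_rep _ (isColimitExtCocone J 0 M) z
  refine ⟨t, ((homIsoExtZero R _).inv.app M).app _ y, congr_arg _ ?_⟩
  exact ConcreteCategory.congr_hom
    (congr_app (congr_app (homIsoExtZero R _).inv_hom_id M) _) y

lemma apply_mk_eq_smul {t : ℕ} {M : ModuleCat.{u} R} (φ : ModuleCat.of R (R ⧸ J ^ t) ⟶ M) (r : R) :
    φ (Ideal.Quotient.mk _ r) = r • φ (Ideal.Quotient.mk _ 1) := by
  rw [← map_smul]
  exact congr_arg φ (by simp [Algebra.smul_def])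

lemma localCohomologyZeroι_injective (M : ModuleCat.{u} R) :
    Function.Injective ((localCohomologyZeroι J).app M) := by
  refine (injective_iff_map_eq_zero ((localCohomologyZeroι J).app M).hom).2 fun z hz => ?_
  obtain ⟨t, φ, rfl⟩ := exists_extCocone_ι_eq J z
  have φ_one : φ (Ideal.Quotient.mk _ 1) = 0 :=
    (extCocone_ι_localCohomologyZeroι J t M φ).symm.trans hz
  have φ_eq_zero : φ = 0 := by
    refine ModuleCat.hom_ext (LinearMap.ext fun (x : R ⧸ J ^ t.unop.unop) => ?_)
    obtain ⟨r, rfl⟩ := Ideal.Quotient.mk_surjective x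
    exact (apply_mk_eq_smul J φ r).trans (by rw [φ_one, smul_zero]; rfl)
  rw [φ_eq_zero]
  exact (congr_arg _ (map_zero _)).trans (map_zero _)

lemma range_localCohomologyZeroι (M : ModuleCat.{u} R) :
    LinearMap.range ((localCohomologyZeroι J).app M).hom = powerTorsion J M := by
  ext m
  constructor
  · rintro ⟨z, rfl⟩
    obtain ⟨t, φ, rfl⟩ := exists_extCocone_ι_eq J z
    refine ⟨t.unop.unop, fun a ha => ?_⟩
    rw [extCocone_ι_localCohomologyZeroι, ← apply_mk_eq_smul, Ideal.Quotient.eq_zero_iff_mem.2 ha]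
    exact map_zero _
  · rintro ⟨t, ht⟩
    let φ : ModuleCat.of R (R ⧸ J ^ t) ⟶ M := ModuleCat.ofHom
      (Submodule.liftQ _ (LinearMap.toSpanSingleton R M m) fun a ha => ht a ha)
    refine ⟨(extCocone J 0 M).ι.app (op (op t)) (((homIsoExtZero R _).hom.app M).app _ φ), ?_⟩
    exact (extCocone_ι_localCohomologyZeroι J (op (op t)) M φ).trans (one_smul R m)

/-- The isomorphism `H^0_J(M) ≃ Γ_J(M)`. -/
noncomputable def localCohomologyZeroEquiv (M : ModuleCat.{u} R) :
    (localCohomology J 0).obj M ≃ₗ[R] powerTorsion J M :=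
  (LinearEquiv.ofInjective _ (localCohomologyZeroι_injective J M)).trans
    (LinearEquiv.ofEq _ _ (range_localCohomologyZeroι J M))

lemma coe_localCohomologyZeroEquiv_map {M N : ModuleCat.{u} R} (f : M ⟶ N)
    (z : (localCohomology J 0).obj M) :
    (localCohomologyZeroEquiv J N ((localCohomology J 0).map f z) : N) =
      f (localCohomologyZeroEquiv J M z : M) :=
  ConcreteCategory.congr_hom ((localCohomologyZeroι J).naturality f) z

end LocalCohomologyZero

section PowerTorsion

variable {R M N : Type*} [CommRing R] [AddCommGroup M] [Module R M] [AddCommGroup N] [Module R N]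
  {J J' : Ideal R}

lemma powerTorsion_anti (h : J ≤ J') : powerTorsion J' M ≤ powerTorsion J M :=
  fun _ ⟨t, ht⟩ => ⟨t, fun a ha => ht a (Ideal.pow_right_mono h t ha)⟩

lemma mem_powerTorsion_bot (m : M) : m ∈ powerTorsion (⊥ : Ideal R) M :=
  ⟨1, fun a ha => by
    rw [pow_one, Ideal.mem_bot] at ha
    rw [ha, zero_smul]⟩

lemma map_powerTorsion_le (f : M →ₗ[R] N) : (powerTorsion J M).map f ≤ powerTorsion J N := by
  rintro _ ⟨m, ⟨t, ht⟩, rfl⟩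
  exact ⟨t, fun a ha => by rw [← map_smul, ht a ha, map_zero]⟩

lemma comap_powerTorsion_of_injective {f : M →ₗ[R] N} (hf : Function.Injective f) :
    (powerTorsion J N).comap f = powerTorsion J M := by
  ext m
  simp only [Submodule.mem_comap, mem_powerTorsion, ← map_smul, map_eq_zero_iff f hf]

end PowerTorsion

section TorsionCohomology

variable {R : Type u} [CommRing R] (J : Ideal R) (K : CochainComplex (ModuleCat.{u} R) ℕ)

/-- The cocycles of the complex `Γ_J(K)` in degree `i`. -/
def torsionCocycles (i : ℕ) : Submodule R (K.X i) :=
  powerTorsion J (K.X i) ⊓ LinearMap.ker (K.d i (i + 1)).hom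

/-- The coboundaries of the complex `Γ_J(K)` in degree `i`. For `i = 0` this is zero, the truncated
subtraction being harmless because `K.d 0 0 = 0`. -/
def torsionCoboundaries (i : ℕ) : Submodule R (K.X i) :=
  (powerTorsion J (K.X (i - 1))).map (K.d (i - 1) i).hom

/-- The cohomology of the complex `Γ_J(K)` in degree `i`. -/
abbrev torsionCohomology (i : ℕ) : Type u :=
  torsionCocycles J K i ⧸ (torsionCoboundaries J K i).submoduleOf (torsionCocycles J K i)

lemma torsionCoboundaries_zero : torsionCoboundaries J K 0 = ⊥ := by
  rw [torsionCoboundaries, K.shape 0 0 (by simp), ModuleCat.hom_zero, Submodule.map_zero]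

lemma torsionCoboundaries_le_torsionCocycles (i : ℕ) :
    torsionCoboundaries J K i ≤ torsionCocycles J K i := by
  refine le_inf (map_powerTorsion_le _) ?_
  rintro _ ⟨m, -, rfl⟩
  exact ConcreteCategory.congr_hom (K.d_comp_d (i - 1) i (i + 1)) m

lemma range_iCycles (i : ℕ) :
    LinearMap.range (K.iCycles i).hom = LinearMap.ker (K.d i (i + 1)).hom :=
  ((ShortComplex.ShortExact.moduleCat_exact_iff_function_exact _).1
    (ShortComplex.exact_of_f_is_kernel (ShortComplex.mk _ _ (K.iCycles_d i (i + 1)))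
      (K.cyclesIsKernel i (i + 1) (by simp)))).linearMap_ker_eq.symm

lemma iCycles_injective (i : ℕ) : Function.Injective (K.iCycles i).hom :=
  (ModuleCat.mono_iff_injective _).1 inferInstance

lemma map_iCycles_powerTorsion (i : ℕ) :
    (powerTorsion J (K.cycles i)).map (K.iCycles i).hom = torsionCocycles J K i := by
  rw [torsionCocycles, ← range_iCycles, ← comap_powerTorsion_of_injective (iCycles_injective K i),
    Submodule.map_comap_eq, inf_comm]

/-- The identification of `H^0_J` of the cocycles of `K` with the cocycles of `Γ_J(K)`. -/
noncomputable def localCohomologyZeroCyclesEquiv (i : ℕ) :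
    (localCohomology J 0).obj (K.cycles i) ≃ₗ[R] torsionCocycles J K i :=
  (localCohomologyZeroEquiv J _).trans
    ((Submodule.equivMapOfInjective _ (iCycles_injective K i) _).trans
      (LinearEquiv.ofEq _ _ (map_iCycles_powerTorsion J K i)))

/-- The short complex `Z^i ⟶ K^i ⟶ Z^{i+1}`, where `Z` denotes cocycles. -/
@[simps]
noncomputable def cyclesShortComplex (i : ℕ) : ShortComplex (ModuleCat.{u} R) where
  X₁ := K.cycles i
  X₂ := K.X i
  X₃ := K.cycles (i + 1)
  f := K.iCycles i
  g := K.toCycles i (i + 1)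
  zero := by simp [← cancel_mono (K.iCycles (i + 1))]

variable {K}

lemma exactAt_succ_iff {i : ℕ} :
    K.ExactAt (i + 1) ↔ Function.Exact (K.d i (i + 1)) (K.d (i + 1) (i + 2)) := by
  rw [K.exactAt_iff' i (i + 1) (i + 2) (by simp) (by simp)]
  exact ShortComplex.ShortExact.moduleCat_exact_iff_function_exact _

lemma toCycles_surjective {i : ℕ} (hK : K.ExactAt (i + 1)) :
    Function.Surjective (K.toCycles i (i + 1)).hom := by
  intro y
  obtain ⟨x, hx⟩ := (exactAt_succ_iff.1 hK (K.iCycles (i + 1) y)).1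
    (ConcreteCategory.congr_hom (K.iCycles_d (i + 1) (i + 2)) y)
  exact ⟨x, iCycles_injective K _
    ((ConcreteCategory.congr_hom (K.toCycles_i i (i + 1)) x).trans hx)⟩

lemma shortExact_cyclesShortComplex {i : ℕ} (hK : K.ExactAt (i + 1)) :
    (cyclesShortComplex K i).ShortExact where
  exact := by
    rw [ShortComplex.ShortExact.moduleCat_exact_iff_function_exact, LinearMap.exact_iff]
    have ker_toCycles :
        LinearMap.ker (K.toCycles i (i + 1)).hom = LinearMap.ker (K.d i (i + 1)).hom := by
      rw [← K.toCycles_i i (i + 1), ModuleCat.hom_comp,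
        LinearMap.ker_comp_of_ker_eq_bot _ (LinearMap.ker_eq_bot.2 (iCycles_injective K _))]
    exact ker_toCycles.trans (range_iCycles K i).symm
  mono_f := inferInstanceAs (Mono (K.iCycles i))
  epi_g := (ModuleCat.epi_iff_surjective _).2 (toCycles_surjective hK)

lemma map_range_localCohomology_toCycles (i : ℕ) :
    (LinearMap.range ((localCohomology J 0).map (K.toCycles i (i + 1))).hom).map
      (localCohomologyZeroCyclesEquiv J K (i + 1)).toLinearMap =
      (torsionCoboundaries J K (i + 1)).submoduleOf (torsionCocycles J K (i + 1)) := by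
  have coe_equiv (x : (localCohomology J 0).obj (K.X i)) :
      (localCohomologyZeroCyclesEquiv J K (i + 1)
        ((localCohomology J 0).map (K.toCycles i (i + 1)) x) : K.X (i + 1)) =
        K.d i (i + 1) (localCohomologyZeroEquiv J (K.X i) x) :=
    (congr_arg (K.iCycles (i + 1)) (coe_localCohomologyZeroEquiv_map J _ x)).trans
      (ConcreteCategory.congr_hom (K.toCycles_i i (i + 1)) _)
  ext z
  constructor
  · rintro ⟨_, ⟨x, rfl⟩, rfl⟩
    exact ⟨_, (localCohomologyZeroEquiv J _ x).2, (coe_equiv x).symm⟩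
  · rintro ⟨m, hm, hmz⟩
    refine ⟨_, ⟨(localCohomologyZeroEquiv J _).symm ⟨m, hm⟩, rfl⟩, Subtype.ext ?_⟩
    exact (coe_equiv _).trans (by rw [LinearEquiv.apply_symm_apply]; exact hmz)

/-- The isomorphism `H^1_J(Z^k) ≃ H^{k+1}(Γ_J(K))`, where `Z^k` denotes the cocycles of `K`. -/
noncomputable def localCohomologyOneCyclesEquiv {k : ℕ} (hK : K.ExactAt (k + 1))
    [Injective (K.X k)] :
    (localCohomology J 1).obj (K.cycles k) ≃ₗ[R] torsionCohomology J K (k + 1) :=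
  have : Injective (cyclesShortComplex K k).X₂ := ‹_›
  ((localCohomologyδ J (shortExact_cyclesShortComplex hK) 0).hom.quotKerEquivOfSurjective
      (localCohomologyδ_surjective J _ 0)).symm.trans
    (Submodule.Quotient.equiv _ _ (localCohomologyZeroCyclesEquiv J K (k + 1)) (by
      rw [(localCohomology_exact₃ J (shortExact_cyclesShortComplex hK) 0).linearMap_ker_eq]
      exact map_range_localCohomology_toCycles J k))

lemma nonempty_localCohomologyCyclesEquiv (hK : ∀ i, K.ExactAt (i + 1))
    (hI : ∀ i, Injective (K.X i)) (i k : ℕ) : Nonempty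
      ((localCohomology J (i + 1)).obj (K.cycles k) ≃ₗ[R] torsionCohomology J K (k + i + 1)) := by
  induction i generalizing k with
  | zero => exact ⟨localCohomologyOneCyclesEquiv J (hK k)⟩
  | succ i ih =>
    obtain ⟨e⟩ := ih (k + 1)
    have : Injective (cyclesShortComplex K k).X₂ := hI k
    rw [← add_assoc, add_right_comm k i 1]
    exact ⟨(LinearEquiv.ofBijective _
      ⟨localCohomologyδ_succ_injective J (shortExact_cyclesShortComplex (hK k)) i,
        localCohomologyδ_surjective J _ (i + 1)⟩).symm.trans e⟩

variable {M : ModuleCat.{u} R}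

lemma nonempty_localCohomologyEquivTorsionCohomology (I : InjectiveResolution M) (i : ℕ) :
    Nonempty ((localCohomology J i).obj M ≃ₗ[R] torsionCohomology J I.cocomplex i) := by
  let e : M ≅ I.cocomplex.cycles 0 :=
    I.isLimitKernelFork.conePointUniqueUpToIso (I.cocomplex.cyclesIsKernel 0 1 (by simp))
  let equiv (i : ℕ) : (localCohomology J i).obj M ≃ₗ[R]
      (localCohomology J i).obj (I.cocomplex.cycles 0) :=
    ((localCohomology J i).mapIso e).toLinearEquiv
  cases i with
  | zero =>
    have coboundaries_eq_bot :
        (torsionCoboundaries J I.cocomplex 0).submoduleOf (torsionCocycles J _ 0) = ⊥ := by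
      simp [torsionCoboundaries_zero, Submodule.submoduleOf]
    exact ⟨(equiv 0).trans ((localCohomologyZeroCyclesEquiv J _ 0).trans
      (Submodule.quotEquivOfEqBot _ coboundaries_eq_bot).symm)⟩
  | succ i =>
    obtain ⟨e'⟩ := nonempty_localCohomologyCyclesEquiv J I.cocomplex_exactAt_succ I.injective i 0
    rw [zero_add] at e'
    exact ⟨(equiv (i + 1)).trans e'⟩

end TorsionCohomology

section Divisibility

variable {R M : Type*} [CommRing R] [AddCommGroup M] [Module R M]

lemma mem_powerTorsion_sup_span_singleton {J : Ideal R} {x : R} {m : M} :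
    m ∈ powerTorsion (J ⊔ Ideal.span {x}) M ↔ m ∈ powerTorsion J M ∧ ∃ k : ℕ, x ^ k • m = 0 := by
  constructor
  · exact fun h => ⟨powerTorsion_anti le_sup_left h, h.imp fun k hk => hk _ <|
      Ideal.pow_mem_pow (Ideal.mem_sup_right (Ideal.mem_span_singleton_self x)) k⟩
  · rintro ⟨⟨t, ht⟩, k, hk⟩
    refine ⟨t + k, fun a ha => ?_⟩
    obtain ⟨b, hb, c, hc, rfl⟩ := Submodule.mem_sup.1 (Ideal.sup_pow_add_le_pow_sup_pow ha)
    rw [Ideal.span_singleton_pow, Ideal.mem_span_singleton'] at hc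
    obtain ⟨d, rfl⟩ := hc
    rw [add_smul, ht b hb, mul_smul, hk, smul_zero, add_zero]

lemma exists_pow_smul_eq_zero_of_pow_add_smul_eq_zero [IsNoetherian R M] (x : R) :
    ∃ l : ℕ, ∀ (k : ℕ) (m : M), x ^ (k + l) • m = 0 → x ^ l • m = 0 := by
  obtain ⟨l, hl⟩ := monotone_stabilizes_iff_noetherian.2 ‹IsNoetherian R M›
    (algebraMap R (Module.End R M) x).iterateKer
  have mem_iterateKer (j : ℕ) (m : M) :
      m ∈ (algebraMap R (Module.End R M) x).iterateKer j ↔ x ^ j • m = 0 := by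
    rw [LinearMap.iterateKer_coe, ← map_pow, LinearMap.mem_ker, Module.algebraMap_end_apply]
  refine ⟨l, fun k m hm => ?_⟩
  rwa [← mem_iterateKer, hl (k + l) le_add_self, mem_iterateKer]

lemma exists_comp_eq_of_ker_le_ker {R A B E : Type u} [CommRing R] [AddCommGroup A]
    [AddCommGroup B] [AddCommGroup E] [Module R A] [Module R B] [Module R E] [Module.Injective R E]
    (g : A →ₗ[R] B) (h : A →ₗ[R] E) (hgh : LinearMap.ker g ≤ LinearMap.ker h) :
    ∃ u : B →ₗ[R] E, u ∘ₗ g = h := by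
  obtain ⟨u, hu⟩ := Module.Injective.out ((LinearMap.ker g).liftQ g le_rfl)
    (LinearMap.ker_eq_bot.1 (Submodule.ker_liftQ_eq_bot _ _ _ le_rfl))
    ((LinearMap.ker g).liftQ h hgh)
  exact ⟨u, LinearMap.ext fun a => hu (Submodule.Quotient.mk a)⟩

lemma exists_mem_powerTorsion_pow_smul_eq {R E : Type u} [CommRing R] [IsNoetherianRing R]
    [AddCommGroup E] [Module R E] [Module.Injective R E] {J : Ideal R} {w : E}
    (hw : w ∈ powerTorsion J E) (x : R) (k : ℕ) :
    ∃ v ∈ powerTorsion J E, ∃ l : ℕ, x ^ (k + l) • v = x ^ l • w := by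
  obtain ⟨n, hn⟩ := hw
  obtain ⟨l, hl⟩ := exists_pow_smul_eq_zero_of_pow_add_smul_eq_zero (M := R ⧸ J ^ n) x
  let h₀ : (R ⧸ J ^ n) →ₗ[R] E := (J ^ n).liftQ (LinearMap.toSpanSingleton R E w) hn
  have h₀_one : h₀ 1 = w := one_smul R w
  obtain ⟨u, hu⟩ := exists_comp_eq_of_ker_le_ker (LinearMap.lsmul R (R ⧸ J ^ n) (x ^ (k + l)))
    (x ^ l • h₀) fun a ha => by
      rw [LinearMap.mem_ker, LinearMap.smul_apply, ← map_smul, hl k a ha, map_zero]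
  refine ⟨u 1, ⟨n, fun a ha => ?_⟩, l, ?_⟩
  · have smul_one : a • (1 : R ⧸ J ^ n) = 0 := by
      rw [Algebra.smul_def, mul_one]
      exact Ideal.Quotient.eq_zero_iff_mem.2 ha
    rw [← map_smul, smul_one, map_zero]
  · rw [← map_smul, ← h₀_one]
    exact LinearMap.congr_fun hu 1

end Divisibility

section Restriction

variable {R : Type u} [CommRing R] {J J' : Ideal R} {K : CochainComplex (ModuleCat.{u} R) ℕ}

lemma torsionCocycles_anti (h : J ≤ J') (i : ℕ) : torsionCocycles J' K i ≤ torsionCocycles J K i :=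
  inf_le_inf_right _ (powerTorsion_anti h)

lemma torsionCoboundaries_anti (h : J ≤ J') (i : ℕ) :
    torsionCoboundaries J' K i ≤ torsionCoboundaries J K i :=
  Submodule.map_mono (powerTorsion_anti h)

lemma mem_torsionCoboundaries_succ_iff {i : ℕ} {c : K.X (i + 1)} :
    c ∈ torsionCoboundaries J K (i + 1) ↔
      ∃ e ∈ powerTorsion J (K.X i), (K.d i (i + 1)).hom e = c :=
  Iff.rfl

lemma torsionCohomology_mk_eq_zero_iff {i : ℕ} {z : torsionCocycles J K i} :
    (Submodule.Quotient.mk z : torsionCohomology J K i) = 0 ↔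
      (z : K.X i) ∈ torsionCoboundaries J K i :=
  Submodule.Quotient.mk_eq_zero _

variable (K) in
/-- The map on cohomology induced by the inclusion `Γ_{J'}(K) ⊆ Γ_J(K)`, for `J ≤ J'`. -/
def torsionCohomologyRestrict (h : J ≤ J') (i : ℕ) :
    torsionCohomology J' K i →ₗ[R] torsionCohomology J K i :=
  Submodule.mapQ _ _ (Submodule.inclusion (torsionCocycles_anti h i))
    fun _ hz => torsionCoboundaries_anti h i hz

lemma torsionCohomologyRestrict_zero_injective (h : J ≤ J') :
    Function.Injective (torsionCohomologyRestrict K h 0) := by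
  refine (injective_iff_map_eq_zero _).2 fun z hz => ?_
  obtain ⟨z, rfl⟩ := Submodule.Quotient.mk_surjective _ z
  have hz0 : (z : K.X 0) ∈ torsionCoboundaries J K 0 := torsionCohomology_mk_eq_zero_iff.1 hz
  rw [torsionCohomology_mk_eq_zero_iff]
  rwa [torsionCoboundaries_zero] at hz0 ⊢

variable [IsNoetherianRing R] (hK : ∀ i, Injective (K.X i)) {x : R} {i : ℕ}

include hK

lemma exists_mem_torsionCoboundaries_pow_smul_eq {w : K.X i} (hw : w ∈ torsionCoboundaries J K i)
    (x : R) (k : ℕ) : ∃ b ∈ torsionCoboundaries J K i, ∃ l : ℕ, x ^ (k + l) • b = x ^ l • w := by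
  obtain ⟨e, he, rfl⟩ := hw
  have := hK (i - 1)
  have : Module.Injective R (K.X (i - 1)) := Module.injective_module_of_injective_object R _
  obtain ⟨v, hv, l, hvl⟩ := exists_mem_powerTorsion_pow_smul_eq he x k
  exact ⟨_, Submodule.mem_map_of_mem hv, l, by rw [← map_smul, hvl, map_smul]⟩

lemma mem_range_torsionCohomologyRestrict {y : torsionCohomology J K i}
    {k : ℕ} (hy : x ^ k • y = 0) :
    y ∈ LinearMap.range (torsionCohomologyRestrict K (le_sup_left : J ≤ J ⊔ Ideal.span {x}) i) := by
  obtain ⟨c, rfl⟩ := Submodule.Quotient.mk_surjective _ y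
  obtain ⟨b, hb, l, hbl⟩ := exists_mem_torsionCoboundaries_pow_smul_eq hK
    (torsionCohomology_mk_eq_zero_iff (z := x ^ k • c).1 hy) x k
  have hcb : (c - b : K.X i) ∈ torsionCocycles J K i :=
    sub_mem c.2 (torsionCoboundaries_le_torsionCocycles J K i hb)
  refine ⟨Submodule.Quotient.mk ⟨c - b, mem_powerTorsion_sup_span_singleton.2
    ⟨hcb.1, k + l, ?_⟩, hcb.2⟩, (Submodule.Quotient.eq _).2 ?_⟩
  · rw [smul_sub, hbl, Submodule.coe_smul, smul_smul, ← pow_add, add_comm, sub_self]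
  · change (c - b - c : K.X i) ∈ torsionCoboundaries J K i
    simpa only [sub_sub_cancel_left, neg_mem_iff] using hb

lemma exists_forall_smul_eq_zero_of_torsionCohomologyRestrict_succ_eq_zero
    {z : torsionCohomology (J ⊔ Ideal.span {x}) K (i + 1)}
    (hz : torsionCohomologyRestrict K le_sup_left (i + 1) z = 0) :
    ∃ m : torsionCohomology J K i, ∀ (t : R) (l : ℕ), x ^ l • t • m = 0 → t • z = 0 := by
  obtain ⟨z, rfl⟩ := Submodule.Quotient.mk_surjective _ z
  obtain ⟨e, he, hez⟩ :=
    mem_torsionCoboundaries_succ_iff.1 (torsionCohomology_mk_eq_zero_iff.1 hz)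
  obtain ⟨k, hk⟩ := (mem_powerTorsion_sup_span_singleton.1 z.2.1).2
  let c : torsionCocycles J K i := ⟨x ^ k • e,
    Submodule.smul_mem _ _ he, by
      rw [SetLike.mem_coe, LinearMap.mem_ker, map_smul, ← hk]
      exact congr_arg _ hez⟩
  refine ⟨Submodule.Quotient.mk c, fun t l hl => ?_⟩
  obtain ⟨b, hb, l', hbl⟩ := exists_mem_torsionCoboundaries_pow_smul_eq hK
    (w := x ^ l • t • x ^ k • e)
    (torsionCohomology_mk_eq_zero_iff (z := x ^ l • t • c).1 hl) x (l + k)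
  have hteb : t • e - b ∈ powerTorsion (J ⊔ Ideal.span {x}) (K.X i) := by
    refine mem_powerTorsion_sup_span_singleton.2
      ⟨sub_mem (Submodule.smul_mem _ _ he) (torsionCoboundaries_le_torsionCocycles J K i hb).1,
        l + k + l', ?_⟩
    rw [smul_sub, hbl]
    module
  refine torsionCohomology_mk_eq_zero_iff (z := t • z).2
    (mem_torsionCoboundaries_succ_iff.2 ⟨t • e - b, hteb, ?_⟩)
  rw [map_sub, map_smul, (torsionCoboundaries_le_torsionCocycles J K i hb).2, sub_zero]
  exact congr_arg (t • ·) hez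

end Restriction

section Support

variable {R N : Type*} [CommRing R] [AddCommGroup N] [Module R N]

lemma exists_mem_smul_eq_zero_of_forall_not_disjoint {S : Submonoid R}
    (h : ∀ p ∈ Module.support R N, ¬ Disjoint (p.asIdeal : Set R) S) (m : N) :
    ∃ s ∈ S, s • m = 0 := by
  by_contra! hm
  obtain ⟨p, hp, hmp, hpS⟩ := Ideal.exists_le_prime_disjoint (R ∙ m).annihilator S <|
    Set.disjoint_left.2 fun a ha haS => hm a haS <| by
      rwa [SetLike.mem_coe, Submodule.mem_annihilator_span_singleton] at ha
  exact h ⟨p, hp⟩ (Module.mem_support_iff_exists_annihilator.2 ⟨m, hmp⟩) hpS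

lemma exists_pow_smul_eq_zero_of_support_subset_zeroLocus {x : R}
    (h : Module.support R N ⊆ PrimeSpectrum.zeroLocus {x}) (m : N) : ∃ k : ℕ, x ^ k • m = 0 := by
  obtain ⟨_, ⟨k, rfl⟩, hk⟩ := LocalizedModule.subsingleton_iff.1
    (LocalizedModule.subsingleton_iff_support_subset.2 h) m
  exact ⟨k, hk⟩

lemma exists_pow_smul_smul_eq_zero_of_forall_notMem_support {p : PrimeSpectrum R} {x : R}
    (h : ∀ q ≤ p, x ∉ q.asIdeal → q ∉ Module.support R N) (m : N) :
    ∃ t ∉ p.asIdeal, ∃ l : ℕ, x ^ l • t • m = 0 := by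
  have not_disjoint (q : PrimeSpectrum R) (hq : q ∈ Module.support R N) :
      ¬ Disjoint (q.asIdeal : Set R) (Submonoid.powers x ⊔ p.asIdeal.primeCompl : Submonoid R) := by
    rw [Set.disjoint_left]
    intro hdisj
    refine h q (fun a ha => not_not.1 fun hap => ?_) (fun hxq => ?_) hq
    · exact hdisj ha (Submonoid.mem_sup_right hap)
    · exact hdisj hxq (Submonoid.mem_sup_left (Submonoid.mem_powers x))
  obtain ⟨_, hs, hsm⟩ := exists_mem_smul_eq_zero_of_forall_not_disjoint not_disjoint m
  obtain ⟨_, ⟨l, rfl⟩, t, ht, rfl⟩ := Submonoid.mem_sup.1 hs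
  exact ⟨t, ht, l, by rwa [smul_smul]⟩

lemma support_subset_zeroLocus_of_powerTorsion_eq_top {J : Ideal R} (h : powerTorsion J N = ⊤) :
    Module.support R N ⊆ PrimeSpectrum.zeroLocus J := by
  intro p hp a ha
  obtain ⟨m, hm⟩ := Module.mem_support_iff_exists_annihilator.1 hp
  obtain ⟨k, hk⟩ : m ∈ powerTorsion J N := h ▸ Submodule.mem_top
  exact p.isPrime.mem_of_pow_mem k <| hm <|
    (Submodule.mem_annihilator_span_singleton _ _).2 (hk _ (Ideal.pow_mem_pow ha k))

lemma isMaximal_of_mem_support_of_isArtinian [IsArtinian R N] {p : PrimeSpectrum R}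
    (hp : p ∈ Module.support R N) : p.asIdeal.IsMaximal := by
  obtain ⟨m, hm⟩ := Module.mem_support_iff_exists_annihilator.1 hp
  have hle : Ideal.torsionOf R N m ≤ p.asIdeal := fun a ha =>
    hm ((Submodule.mem_annihilator_span_singleton _ _).2 ((Ideal.mem_torsionOf_iff _ _).1 ha))
  have : IsArtinian R (R ⧸ Ideal.torsionOf R N m) :=
    isArtinian_of_linearEquiv (Ideal.quotTorsionOfEquivSpanSingleton R N m).symm
  have : IsArtinian R (R ⧸ p.asIdeal) :=
    isArtinian_of_surjective _ (Submodule.factor hle) (Submodule.factor_surjective hle)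
  have : IsArtinianRing (R ⧸ p.asIdeal) := isArtinian_of_tower R this
  exact Ideal.Quotient.maximal_of_isField _ (IsArtinianRing.isField_of_isDomain _)

end Support

section RestrictionSupport

variable {R : Type u} [CommRing R] {J : Ideal R} {K : CochainComplex (ModuleCat.{u} R) ℕ}

lemma powerTorsion_torsionCohomology (i : ℕ) : powerTorsion J (torsionCohomology J K i) = ⊤ := by
  refine eq_top_iff.2 fun y _ => ?_
  obtain ⟨c, rfl⟩ := Submodule.Quotient.mk_surjective _ y
  obtain ⟨k, hk⟩ := c.2.1
  exact ⟨k, fun a ha => (congr_arg _ (Subtype.ext (hk a ha))).trans (Submodule.Quotient.mk_zero _)⟩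

lemma subsingleton_torsionCohomology_bot_succ {i : ℕ} (hK : K.ExactAt (i + 1)) :
    Subsingleton (torsionCohomology ⊥ K (i + 1)) := by
  refine subsingleton_of_forall_eq 0 fun y => ?_
  obtain ⟨c, rfl⟩ := Submodule.Quotient.mk_surjective _ y
  obtain ⟨e, he⟩ := (exactAt_succ_iff.1 hK c).1 c.2.2
  exact torsionCohomology_mk_eq_zero_iff.2
    (mem_torsionCoboundaries_succ_iff.2 ⟨e, mem_powerTorsion_bot e, he⟩)

variable [IsNoetherianRing R] (hK : ∀ i, Injective (K.X i)) {x : R} {i : ℕ}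

include hK

lemma torsionCohomologyRestrict_surjective
    (hx : Module.support R (torsionCohomology J K i) ⊆ PrimeSpectrum.zeroLocus {x}) :
    Function.Surjective
      (torsionCohomologyRestrict K (le_sup_left : J ≤ J ⊔ Ideal.span {x}) i) := fun y =>
  have ⟨_, hk⟩ := exists_pow_smul_eq_zero_of_support_subset_zeroLocus hx y
  mem_range_torsionCohomologyRestrict hK hk

lemma torsionCohomologyRestrict_succ_injective
    (hx : Module.support R (torsionCohomology J K i) ⊆ PrimeSpectrum.zeroLocus {x}) :
    Function.Injective
      (torsionCohomologyRestrict K (le_sup_left : J ≤ J ⊔ Ideal.span {x}) (i + 1)) := by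
  refine (injective_iff_map_eq_zero _).2 fun z hz => ?_
  obtain ⟨m, hm⟩ := exists_forall_smul_eq_zero_of_torsionCohomologyRestrict_succ_eq_zero hK hz
  obtain ⟨k, hk⟩ := exists_pow_smul_eq_zero_of_support_subset_zeroLocus hx m
  rw [← one_smul R z, hm 1 k (by rw [one_smul, hk])]

lemma mem_support_or_exists_mem_support_torsionCohomology {p : PrimeSpectrum R}
    (hp : p ∈ Module.support R (torsionCohomology (J ⊔ Ideal.span {x}) K (i + 1))) :
    p ∈ Module.support R (torsionCohomology J K (i + 1)) ∨
      ∃ q ≤ p, x ∉ q.asIdeal ∧ q ∈ Module.support R (torsionCohomology J K i) := by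
  by_contra! ⟨hpJ, hq⟩
  rw [Module.notMem_support_iff'] at hpJ
  refine Module.notMem_support_iff'.2 (fun z => ?_) hp
  obtain ⟨r, hr, hrz⟩ := hpJ (torsionCohomologyRestrict K le_sup_left (i + 1) z)
  obtain ⟨m, hm⟩ := exists_forall_smul_eq_zero_of_torsionCohomologyRestrict_succ_eq_zero hK
    (z := r • z) (by rw [map_smul, hrz])
  obtain ⟨t, ht, l, htl⟩ := exists_pow_smul_smul_eq_zero_of_forall_notMem_support hq m
  exact ⟨t * r, p.asIdeal.primeCompl.mul_mem ht hr, by rw [mul_smul, hm t l htl]⟩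

end RestrictionSupport

section LocalCohomologySupport

variable {R : Type u} [CommRing R] {J : Ideal R} {M : ModuleCat.{u} R} {i : ℕ}

lemma support_localCohomology_eq (J : Ideal R) (I : InjectiveResolution M) (i : ℕ) :
    Module.support R ((localCohomology J i).obj M) =
      Module.support R (torsionCohomology J I.cocomplex i) :=
  let ⟨e⟩ := nonempty_localCohomologyEquivTorsionCohomology J I i
  e.support_eq

lemma support_localCohomology_subset_zeroLocus (J : Ideal R) (M : ModuleCat.{u} R) (i : ℕ) :
    Module.support R ((localCohomology J i).obj M) ⊆ PrimeSpectrum.zeroLocus J := by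
  rw [support_localCohomology_eq J (InjectiveResolution.of M)]
  exact support_subset_zeroLocus_of_powerTorsion_eq_top (powerTorsion_torsionCohomology i)

lemma support_localCohomology_zero_subset (J : Ideal R) (M : ModuleCat.{u} R) :
    Module.support R ((localCohomology J 0).obj M) ⊆ Module.support R M := by
  rw [(localCohomologyZeroEquiv J M).support_eq]
  exact Module.support_subset_of_injective _ (powerTorsion J M).injective_subtype

lemma subsingleton_localCohomology_bot_succ (M : ModuleCat.{u} R) (i : ℕ) :
    Subsingleton ((localCohomology (⊥ : Ideal R) (i + 1)).obj M) := by
  let I := InjectiveResolution.of M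
  rw [← Module.support_eq_empty_iff (R := R), support_localCohomology_eq ⊥ I,
    Module.support_eq_empty_iff]
  exact subsingleton_torsionCohomology_bot_succ (I.cocomplex_exactAt_succ i)

variable [IsNoetherianRing R] {x : R}

lemma exists_surjective_of_support_localCohomology_subset
    (hx : Module.support R ((localCohomology J i).obj M) ⊆ PrimeSpectrum.zeroLocus {x}) :
    ∃ f : (localCohomology (J ⊔ Ideal.span {x}) i).obj M →ₗ[R] (localCohomology J i).obj M,
      Function.Surjective f := by
  let I := InjectiveResolution.of M
  obtain ⟨e⟩ := nonempty_localCohomologyEquivTorsionCohomology J I i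
  obtain ⟨e'⟩ := nonempty_localCohomologyEquivTorsionCohomology (J ⊔ Ideal.span {x}) I i
  rw [support_localCohomology_eq J I] at hx
  have surjective := torsionCohomologyRestrict_surjective I.injective hx
  let restrict := torsionCohomologyRestrict I.cocomplex (le_sup_left : J ≤ J ⊔ Ideal.span {x}) i
  exact ⟨e.symm.toLinearMap ∘ₗ restrict ∘ₗ e'.toLinearMap,
    e.symm.surjective.comp (surjective.comp e'.surjective)⟩

lemma nonempty_localCohomologySupSpanSingletonEquiv
    (hx : ∀ i, Module.support R ((localCohomology J i).obj M) ⊆ PrimeSpectrum.zeroLocus {x})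
    (i : ℕ) : Nonempty
      ((localCohomology (J ⊔ Ideal.span {x}) i).obj M ≃ₗ[R] (localCohomology J i).obj M) := by
  let I := InjectiveResolution.of M
  obtain ⟨e⟩ := nonempty_localCohomologyEquivTorsionCohomology J I i
  obtain ⟨e'⟩ := nonempty_localCohomologyEquivTorsionCohomology (J ⊔ Ideal.span {x}) I i
  simp only [support_localCohomology_eq J I] at hx
  have injective : Function.Injective (torsionCohomologyRestrict I.cocomplex le_sup_left i) :=
    match i with
    | 0 => torsionCohomologyRestrict_zero_injective le_sup_left
    | i + 1 => torsionCohomologyRestrict_succ_injective I.injective (hx i)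
  exact ⟨e'.trans ((LinearEquiv.ofBijective _
    ⟨injective, torsionCohomologyRestrict_surjective I.injective (hx i)⟩).trans e.symm)⟩

lemma mem_support_or_exists_mem_support_localCohomology {p : PrimeSpectrum R}
    (hp : p ∈ Module.support R ((localCohomology (J ⊔ Ideal.span {x}) (i + 1)).obj M)) :
    p ∈ Module.support R ((localCohomology J (i + 1)).obj M) ∨
      ∃ q ≤ p, x ∉ q.asIdeal ∧ q ∈ Module.support R ((localCohomology J i).obj M) := by
  let I := InjectiveResolution.of M
  simp only [support_localCohomology_eq _ I] at hp ⊢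
  exact mem_support_or_exists_mem_support_torsionCohomology I.injective hp

lemma subsingleton_localCohomology_sup_span_singleton_succ
    [Subsingleton ((localCohomology J (i + 1)).obj M)]
    (hx : Module.support R ((localCohomology J i).obj M) ⊆ PrimeSpectrum.zeroLocus {x}) :
    Subsingleton ((localCohomology (J ⊔ Ideal.span {x}) (i + 1)).obj M) := by
  refine (Module.support_eq_empty_iff (R := R)).1 (Set.eq_empty_iff_forall_notMem.2 fun p hp => ?_)
  rcases mem_support_or_exists_mem_support_localCohomology hp with hpJ | ⟨q, -, hxq, hq⟩
  · simp [Module.support_eq_empty] at hpJ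
  · exact hxq (hx hq rfl)

end LocalCohomologySupport

section Vanishing

variable {R : Type u} [CommRing R] [IsNoetherianRing R] {J : Ideal R} {M : ModuleCat.{u} R}
  {i : ℕ} {p : PrimeSpectrum R}

lemma exists_lt_mem_support_of_mem_support_localCohomology_succ
    (hp : p ∈ Module.support R ((localCohomology J (i + 1)).obj M)) :
    ∃ (J' : Ideal R) (q : PrimeSpectrum R),
      q < p ∧ q ∈ Module.support R ((localCohomology J' i).obj M) := by
  by_contra! hlt
  suffices restrict : ∀ J', p ∈ Module.support R ((localCohomology (J' ⊔ J) (i + 1)).obj M) →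
      p ∈ Module.support R ((localCohomology J' (i + 1)).obj M) by
    have := subsingleton_localCohomology_bot_succ M i
    simpa [Module.support_eq_empty] using restrict ⊥ (by rwa [bot_sup_eq])
  clear hp
  induction J, IsNoetherian.noetherian J using Submodule.fg_induction with
  | singleton x =>
    intro J' hp
    refine (mem_support_or_exists_mem_support_localCohomology hp).resolve_right ?_
    rintro ⟨q, hqp, hxq, hq⟩
    have hxp : x ∈ p.asIdeal := support_localCohomology_subset_zeroLocus _ _ _ hp
      (Ideal.mem_sup_right (Ideal.mem_span_singleton_self x))
    exact hlt J' q (hqp.lt_of_ne (by rintro rfl; exact hxq hxp)) hq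
  | sup I₁ I₂ _ _ h₁ h₂ =>
    intro J' hp
    rw [← sup_assoc] at hp
    exact h₁ J' (h₂ _ hp)

/-- **Grothendieck vanishing**, in terms of heights in the support. -/
lemma exists_le_height_of_mem_support_localCohomology
    (hp : p ∈ Module.support R ((localCohomology J i).obj M)) :
    ∃ hpM : p ∈ Module.support R M, i ≤ Order.height (⟨p, hpM⟩ : Module.support R M) := by
  induction i generalizing J p with
  | zero => exact ⟨support_localCohomology_zero_subset J M hp, by simp⟩
  | succ i ih =>
    obtain ⟨J', q, hqp, hq⟩ := exists_lt_mem_support_of_mem_support_localCohomology_succ hp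
    obtain ⟨hqM, hi⟩ := ih hq
    refine ⟨Module.mem_support_mono hqp.le hqM, ?_⟩
    have hlt : (⟨q, hqM⟩ : Module.support R M) < ⟨p, Module.mem_support_mono hqp.le hqM⟩ := hqp
    rw [Nat.cast_add, Nat.cast_one]
    exact (add_le_add_left hi 1).trans (Order.height_add_one_le hlt)

lemma support_localCohomology_subset_zeroLocus_annihilator (J : Ideal R) (M : ModuleCat.{u} R)
    (i : ℕ) : Module.support R ((localCohomology J i).obj M) ⊆
      PrimeSpectrum.zeroLocus (Module.annihilator R M) := fun _ hp =>
  Module.annihilator_le_of_mem_support (exists_le_height_of_mem_support_localCohomology hp).1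

lemma nonempty_localCohomologySupAnnihilatorEquiv (J : Ideal R) (M : ModuleCat.{u} R) (i : ℕ) :
    Nonempty ((localCohomology (J ⊔ Module.annihilator R M) i).obj M ≃ₗ[R]
      (localCohomology J i).obj M) := by
  suffices ∀ 𝔞 ≤ Module.annihilator R M, ∀ J : Ideal R,
      Nonempty ((localCohomology (J ⊔ 𝔞) i).obj M ≃ₗ[R] (localCohomology J i).obj M) from
    this _ le_rfl J
  intro 𝔞
  induction 𝔞, IsNoetherian.noetherian 𝔞 using Submodule.fg_induction with
  | singleton a =>
    intro ha J
    refine nonempty_localCohomologySupSpanSingletonEquiv (fun i => ?_) i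
    exact (support_localCohomology_subset_zeroLocus_annihilator J M i).trans
      (PrimeSpectrum.zeroLocus_anti_mono (Set.singleton_subset_iff.2
        ((Submodule.span_singleton_le_iff_mem _ _).1 ha)))
  | sup I₁ I₂ _ _ h₁ h₂ =>
    intro h J
    obtain ⟨e₁⟩ := h₁ (le_sup_left.trans h) J
    obtain ⟨e₂⟩ := h₂ (le_sup_right.trans h) (J ⊔ I₁)
    rw [← sup_assoc]
    exact ⟨e₂.trans e₁⟩

lemma nonempty_localCohomologyEquivOfRadicalSupAnnihilatorEq
    {J K : Ideal R} (h : (J ⊔ Module.annihilator R M).radical = K.radical) (i : ℕ) :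
    Nonempty ((localCohomology K i).obj M ≃ₗ[R] (localCohomology J i).obj M) := by
  obtain ⟨e⟩ := nonempty_localCohomologySupAnnihilatorEquiv J M i
  exact ⟨((localCohomology.isoOfSameRadical h.symm i).app M).toLinearEquiv.trans e⟩

lemma subsingleton_localCohomology_of_supportDim_lt (J : Ideal R)
    (h : Module.supportDim R M < i) : Subsingleton ((localCohomology J i).obj M) := by
  refine (Module.support_eq_empty_iff (R := R)).1 (Set.eq_empty_iff_forall_notMem.2 fun p hp => ?_)
  obtain ⟨hpM, hi⟩ := exists_le_height_of_mem_support_localCohomology hp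
  exact h.not_ge ((WithBot.coe_le_coe.2 hi).trans (Order.height_le_krullDim _))

lemma isMaximal_of_mem_support_localCohomology_of_supportDim_le
    (h : Module.supportDim R M ≤ i) (hp : p ∈ Module.support R ((localCohomology J i).obj M)) :
    p.asIdeal.IsMaximal := by
  obtain ⟨hpM, hi⟩ := exists_le_height_of_mem_support_localCohomology hp
  refine PrimeSpectrum.isMax_iff.1 fun q hpq => ?_
  by_contra hqp
  have hlt : (⟨p, hpM⟩ : Module.support R M) < ⟨q, Module.mem_support_mono hpq hpM⟩ :=
    lt_of_le_not_ge hpq hqp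
  have hheight := (add_le_add_left hi 1).trans (Order.height_add_one_le hlt)
  have hdim := (WithBot.coe_le_coe.2 hheight).trans ((Order.height_le_krullDim _).trans h)
  exact (Nat.lt_succ_self i).not_ge (by exact_mod_cast hdim)

end Vanishing

section PrimeAvoidance

variable {R : Type*} [CommRing R] {K : Ideal R}

lemma mem_minimalPrimes_or_isMaximal_of_ringKrullDim_quotient_le_one
    (hK : ringKrullDim (R ⧸ K) ≤ 1) {p : Ideal R} (hp : p.IsPrime) (hKp : K ≤ p) :
    p ∈ K.minimalPrimes ∨ p.IsMaximal := by
  rw [ringKrullDim_quotient, Order.krullDim_le_one_iff] at hK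
  refine (hK ⟨⟨p, hp⟩, hKp⟩).imp (fun hmin => ⟨⟨hp, hKp⟩, fun q hq hqp => ?_⟩)
    (fun hmax => (PrimeSpectrum.isMax_iff (x := ⟨p, hp⟩)).1 fun q hpq => ?_)
  · exact hmin (b := ⟨⟨q, hq.1⟩, hq.2⟩) hqp
  · exact hmax (b := ⟨q, hKp.trans hpq⟩) hpq

variable [IsNoetherianRing R]

lemma exists_mem_maximalIdeal_forall_minimalPrimes [IsLocalRing R] (K : Ideal R) :
    ∃ x ∈ IsLocalRing.maximalIdeal R, ∀ p ∈ K.minimalPrimes, x ∈ p → p.IsMaximal := by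
  let nonmaximal := {p ∈ K.minimalPrimes | ¬ p.IsMaximal}
  have hfin : nonmaximal.Finite := K.finite_minimalPrimes_of_isNoetherianRing.sep _
  have avoid : ¬ (IsLocalRing.maximalIdeal R : Set R) ⊆
      ⋃ p ∈ (hfin.toFinset : Set (Ideal R)), (p : Set R) := by
    rw [Ideal.subset_union_prime (f := fun p : Ideal R => p) ⊥ ⊥
      fun p hp _ _ => (hfin.mem_toFinset.1 hp).1.1.1]
    rintro ⟨p, hp, hmp⟩
    obtain ⟨hpK, hpmax⟩ := hfin.mem_toFinset.1 hp
    exact hpmax ((IsLocalRing.maximalIdeal.isMaximal R).eq_of_le hpK.1.1.ne_top hmp ▸ inferInstance)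
  obtain ⟨x, hx, hxp⟩ := Set.not_subset.1 avoid
  refine ⟨x, hx, fun p hp hxmem => by_contra fun hpmax => hxp ?_⟩
  exact Set.mem_biUnion (Finset.mem_coe.2 (hfin.mem_toFinset.2 ⟨hp, hpmax⟩)) hxmem

lemma exists_radical_sup_span_singleton_eq_maximalIdeal [IsLocalRing R] (hK : K ≠ ⊤)
    (hdim : ringKrullDim (R ⧸ K) ≤ 1) : ∃ x ∈ IsLocalRing.maximalIdeal R,
      (K ⊔ Ideal.span {x}).radical = IsLocalRing.maximalIdeal R := by
  obtain ⟨x, hx, hxmin⟩ := exists_mem_maximalIdeal_forall_minimalPrimes K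
  have hle : K ⊔ Ideal.span {x} ≤ IsLocalRing.maximalIdeal R :=
    sup_le (IsLocalRing.le_maximalIdeal hK) ((Ideal.span_singleton_le_iff_mem _).2 hx)
  refine ⟨x, hx, le_antisymm ((Ideal.IsPrime.radical_le_iff inferInstance).2 hle) ?_⟩
  rw [Ideal.radical_eq_sInf]
  refine le_sInf fun q ⟨hq, hqprime⟩ => ?_
  have hxq : x ∈ q := hq (Ideal.mem_sup_right (Ideal.mem_span_singleton_self x))
  have hqmax : q.IsMaximal := (mem_minimalPrimes_or_isMaximal_of_ringKrullDim_quotient_le_one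
    hdim hqprime (le_sup_left.trans hq)).elim (hxmin q · hxq) id
  exact (IsLocalRing.eq_maximalIdeal hqmax).ge

end PrimeAvoidance

section CohomologicalDimension

variable {R : Type u} [CommRing R] {I : Ideal R} {M : ModuleCat.{u} R}

lemma cohomologicalDimension_le_natCast_iff {n : ℕ} : cohomologicalDimension I M ≤ n ↔
    ∀ i, n < i → Subsingleton ((localCohomology I i).obj M) := by
  refine sSup_le_iff.trans ⟨fun h i hi => ?_, ?_⟩
  · refine not_nontrivial_iff_subsingleton.1 fun hne => hi.not_ge ?_
    exact_mod_cast h _ ⟨i, rfl, hne⟩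
  · rintro h _ ⟨i, rfl, hne⟩
    refine Nat.cast_le.2 (le_of_not_gt fun hi => ?_)
    exact not_nontrivial_iff_subsingleton.2 (h i hi) hne

variable [IsNoetherianRing R]

lemma cohomologicalDimension_le_of_supportDim_le (I : Ideal R) {n : ℕ}
    (h : Module.supportDim R M ≤ n) : cohomologicalDimension I M ≤ n :=
  cohomologicalDimension_le_natCast_iff.2 fun _ hi =>
    subsingleton_localCohomology_of_supportDim_lt I (h.trans_lt (by exact_mod_cast hi))

variable {x : R}

lemma support_localCohomology_subset_zeroLocus_of_mem_jacobson {i : ℕ}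
    (hx : x ∈ (I ⊔ Module.annihilator R M).jacobson)
    (hmax : ∀ p ∈ Module.support R ((localCohomology I i).obj M), p.asIdeal.IsMaximal) :
    Module.support R ((localCohomology I i).obj M) ⊆ PrimeSpectrum.zeroLocus {x} := fun p hp =>
  Set.singleton_subset_iff.2 (Ideal.mem_sInf.1 hx
    ⟨sup_le (support_localCohomology_subset_zeroLocus I M i hp)
      (support_localCohomology_subset_zeroLocus_annihilator I M i hp), hmax p hp⟩)

lemma isArtinian_localCohomology_of_sup_span_singleton {n : ℕ}
    (hn : Module.supportDim R M ≤ n) (hx : x ∈ (I ⊔ Module.annihilator R M).jacobson)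
    [IsArtinian R ((localCohomology (I ⊔ Ideal.span {x}) n).obj M)] :
    IsArtinian R ((localCohomology I n).obj M) := by
  obtain ⟨f, hf⟩ := exists_surjective_of_support_localCohomology_subset
    (support_localCohomology_subset_zeroLocus_of_mem_jacobson hx fun _ =>
      isMaximal_of_mem_support_localCohomology_of_supportDim_le hn)
  exact isArtinian_of_surjective _ f hf

lemma subsingleton_localCohomology_sup_span_singleton_of_isArtinian {c n : ℕ}
    (hc : cohomologicalDimension I M ≤ c) (hcn : c < n)
    (hx : x ∈ (I ⊔ Module.annihilator R M).jacobson)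
    [IsArtinian R ((localCohomology I c).obj M)] :
    Subsingleton ((localCohomology (I ⊔ Ideal.span {x}) n).obj M) := by
  have vanish := cohomologicalDimension_le_natCast_iff.1 hc
  obtain ⟨d, rfl⟩ := Nat.exists_eq_add_one_of_ne_zero (Nat.ne_zero_of_lt hcn)
  have := vanish (d + 1) hcn
  refine subsingleton_localCohomology_sup_span_singleton_succ
    (support_localCohomology_subset_zeroLocus_of_mem_jacobson hx fun p hp => ?_)
  rcases (Nat.lt_succ_iff.1 hcn).eq_or_lt with rfl | hcd
  · exact isMaximal_of_mem_support_of_isArtinian hp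
  · have := vanish d hcd
    simp [Module.support_eq_empty] at hp

end CohomologicalDimension

lemma exists_mem_maximalIdeal_forall_nonempty_localCohomologyEquiv {R : Type u} [CommRing R]
    [IsNoetherianRing R] [IsLocalRing R] (I : Ideal R) (M : ModuleCat.{u} R)
    (hd : ringKrullDim (R ⧸ (I + Module.annihilator R M)) = 1) :
    ∃ x ∈ IsLocalRing.maximalIdeal R, ∀ i,
      Nonempty ((localCohomology (IsLocalRing.maximalIdeal R) i).obj M ≃ₗ[R]
        (localCohomology (I ⊔ Ideal.span {x}) i).obj M) := by
  have hne_top : I + Module.annihilator R M ≠ ⊤ := fun htop => by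
    have := Ideal.Quotient.subsingleton_iff.2 htop
    simp [ringKrullDim_eq_bot_of_subsingleton] at hd
  obtain ⟨x, hx, hrad⟩ := exists_radical_sup_span_singleton_eq_maximalIdeal hne_top hd.le
  rw [Submodule.add_eq_sup, sup_right_comm] at hrad
  exact ⟨x, hx, nonempty_localCohomologyEquivOfRadicalSupAnnihilatorEq
    (hrad.trans (IsLocalRing.maximalIdeal.isMaximal R).isPrime.radical.symm)⟩

theorem isArtinian_top_localCohomology_iff_cd_eq_dim_general
    {R : Type u} [CommRing R] [IsNoetherianRing R] {M : ModuleCat.{u} R} {n : ℕ}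
    (hn : Module.supportDim R M ≤ n) {I : Ideal R} {x : R}
    (hx : x ∈ (I ⊔ Module.annihilator R M).jacobson)
    [Nontrivial ((localCohomology (I ⊔ Ideal.span {x}) n).obj M)]
    [IsArtinian R ((localCohomology (I ⊔ Ideal.span {x}) n).obj M)]
    {c : ℕ} (hc : cohomologicalDimension I M = c) :
    IsArtinian R ((localCohomology I c).obj M) ↔ c = n := by
  constructor
  · intro
    have hcn : c ≤ n := by exact_mod_cast hc ▸ cohomologicalDimension_le_of_supportDim_le I hn
    refine hcn.eq_of_not_lt fun hlt => not_subsingleton _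
      (subsingleton_localCohomology_sup_span_singleton_of_isArtinian hc.le hlt hx)
  · rintro rfl
    exact isArtinian_localCohomology_of_sup_span_singleton hn hx

/-- over a Noetherian local ring, if `M` has Krull dimension `n` with
`H^n_m(M)` nonzero and Artinian, and `dim (R/(I + Ann M)) = 1`, then `H^{cd(I,M)}_I(M)` is
Artinian if and only if `cd(I,M) = n`. -/
theorem isArtinian_top_localCohomology_iff_cd_eq_dim
    (R : Type u) [CommRing R] [IsNoetherianRing R] [IsLocalRing R]
    (M : ModuleCat.{u} R) (n : ℕ)
    (hn : Order.krullDim (Module.support R M) = (n : WithBot ℕ∞))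
    (hne : Nontrivial ((localCohomology (IsLocalRing.maximalIdeal R) n).obj M))
    (hart : IsArtinian R ((localCohomology (IsLocalRing.maximalIdeal R) n).obj M))
    (I : Ideal R)
    (hd : ringKrullDim (R ⧸ (I + Module.annihilator R M)) = (1 : WithBot ℕ∞))
    (c : ℕ) (hc : cohomologicalDimension I M = (c : ℕ∞)) :
    IsArtinian R ((localCohomology I c).obj M) ↔ c = n := by
  obtain ⟨x, hx, e⟩ := exists_mem_maximalIdeal_forall_nonempty_localCohomologyEquiv I M hd
  have := (e n).some.symm.nontrivial
  have := isArtinian_of_linearEquiv (e n).some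
  exact isArtinian_top_localCohomology_iff_cd_eq_dim_general hn.le
    (IsLocalRing.maximalIdeal_le_jacobson _ hx) hc
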